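/- (Long-edged instances: the diagonal traversal is optimal.) Suppose n = m, let D = max over i ∈ Fin n of dist(P i, Q i), and suppose every edge of both curves is longer than 2D, i.e., dist(P i, P (i+1)) > 2D and dist(Q i, Q (i+1)) > 2D for all 0 ≤ i < n−1. Then the discrete Fréchet distance equals the width of the diagonal traversal: dF(P,Q) = D. -/

import Mathlib

/-!
If a traversal of width at most `D` sits at a diagonal pair `(i, i)`, it cannot move to `(i + 1, i)`:
both `P i` and `P (i + 1)` would lie within `D` of `Q i`, making the edge of `P` between them at most
`2 * D` long. Symmetrically it cannot move to `(i, i + 1)`. So such a traversal is the diagonal one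
(`Traversal.eq_diag_of_width_le`), hence visits every `(i, i)` and has width at least `D`. The
diagonal traversal `diagTraversal` attains the value `D`.
-/

/-- A (parallel) traversal of two point sequences of lengths `n` and `m`:
a finite sequence of index pairs starting at `(0,0)`, ending at `(n-1,m-1)`,
each step advancing by `(1,0)`, `(0,1)` or `(1,1)`, with all indices valid. -/
structure Traversal (n m : ℕ) where
  k : ℕ
  c : Fin (k + 1) → ℕ × ℕ
  first : c 0 = (0, 0)
  last : c (Fin.last k) = (n - 1, m - 1)
  step : ∀ t : Fin k,
    c t.succ = c t.castSucc + (1, 0) ∨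
    c t.succ = c t.castSucc + (0, 1) ∨
    c t.succ = c t.castSucc + (1, 1)
  bound : ∀ t, (c t).1 < n ∧ (c t).2 < m

/-- The index into `P` at position `t` of the traversal. -/
def Traversal.pi {n m : ℕ} (T : Traversal n m) (t : Fin (T.k + 1)) : Fin n :=
  ⟨(T.c t).1, (T.bound t).1⟩

/-- The index into `Q` at position `t` of the traversal. -/
def Traversal.qj {n m : ℕ} (T : Traversal n m) (t : Fin (T.k + 1)) : Fin m :=
  ⟨(T.c t).2, (T.bound t).2⟩

/-- The width of a traversal: the maximum distance `dist (P i) (Q j)`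
over its pairs `(i,j)`. -/
noncomputable def Traversal.width {d n m : ℕ} (T : Traversal n m)
    (P : Fin n → EuclideanSpace ℝ (Fin d)) (Q : Fin m → EuclideanSpace ℝ (Fin d)) : ℝ :=
  Finset.univ.sup' Finset.univ_nonempty fun t : Fin (T.k + 1) =>
    dist (P (T.pi t)) (Q (T.qj t))

/-- The discrete Fréchet distance: the minimum width over all traversals. -/
noncomputable def dF {d n m : ℕ} (P : Fin n → EuclideanSpace ℝ (Fin d))
    (Q : Fin m → EuclideanSpace ℝ (Fin d)) : ℝ :=
  ⨅ T : Traversal n m, T.width P Q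

/-- The diagonal traversal `(0,0), (1,1), …, (n-1,n-1)`. -/
def diagTraversal (n : ℕ) (hn : 1 ≤ n) : Traversal n n where
  k := n - 1
  c t := (t, t)
  first := by simp
  last := by simp
  step t := by simp
  bound t := by
    have := t.isLt
    constructor <;> dsimp only <;> omega

lemma Traversal.dist_le_width {d n m : ℕ} (T : Traversal n m)
    (P : Fin n → EuclideanSpace ℝ (Fin d)) (Q : Fin m → EuclideanSpace ℝ (Fin d))
    {i j : ℕ} (hi : i < n) (hj : j < m) (t : Fin (T.k + 1)) (h : T.c t = (i, j)) :
    dist (P ⟨i, hi⟩) (Q ⟨j, hj⟩) ≤ T.width P Q := by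
  have h1 : T.pi t = ⟨i, hi⟩ := by simp [Traversal.pi, h]
  have h2 : T.qj t = ⟨j, hj⟩ := by simp [Traversal.qj, h]
  rw [← h1, ← h2]
  exact Finset.le_sup' (fun t => dist (P (T.pi t)) (Q (T.qj t))) (Finset.mem_univ t)

lemma Traversal.eq_diag_of_width_le {d n : ℕ} (T : Traversal n n)
    (P Q : Fin n → EuclideanSpace ℝ (Fin d)) {D : ℝ} (hT : T.width P Q ≤ D)
    (hP : ∀ i (hi : i < n) (hi' : i + 1 < n), 2 * D < dist (P ⟨i, hi⟩) (P ⟨i + 1, hi'⟩))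
    (hQ : ∀ i (hi : i < n) (hi' : i + 1 < n), 2 * D < dist (Q ⟨i, hi⟩) (Q ⟨i + 1, hi'⟩)) :
    ∀ t (ht : t < T.k + 1), T.c ⟨t, ht⟩ = (t, t) := by
  intro t
  induction t with
  | zero => exact fun _ => T.first
  | succ t ih =>
    intro ht
    have hc := ih (by omega)
    have hb := T.bound ⟨t, by omega⟩
    have hb' := T.bound ⟨t + 1, ht⟩
    have hs := T.step ⟨t, by omega⟩
    simp only [Fin.succ_mk, Fin.castSucc_mk, hc, Prod.mk_add_mk, add_zero] at hs
    rw [hc] at hb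
    have h0 := T.dist_le_width P Q hb.1 hb.1 _ hc
    rcases hs with hs | hs | hs
    · rw [hs] at hb'
      have h1 := T.dist_le_width P Q hb'.1 hb'.2 _ hs
      have := hP t hb.1 hb'.1
      have := dist_triangle_right (P ⟨t, hb.1⟩) (P ⟨t + 1, hb'.1⟩) (Q ⟨t, hb.1⟩)
      linarith
    · rw [hs] at hb'
      have h1 := T.dist_le_width P Q hb'.1 hb'.2 _ hs
      have := hQ t hb.1 hb'.2
      have := dist_triangle_left (Q ⟨t, hb.1⟩) (Q ⟨t + 1, hb'.2⟩) (P ⟨t, hb.1⟩)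
      linarith
    · exact hs

theorem long_edged_diagonal_optimal (d n : ℕ) (hn : 1 ≤ n)
    (P Q : Fin n → EuclideanSpace ℝ (Fin d)) (D : ℝ)
    (hD : D = Finset.univ.sup' ⟨⟨0, hn⟩, Finset.mem_univ _⟩
      (fun i : Fin n => dist (P i) (Q i)))
    (hP : ∀ i : ℕ, (hi : i + 1 < n) → 2 * D < dist (P ⟨i, by omega⟩) (P ⟨i + 1, hi⟩))
    (hQ : ∀ i : ℕ, (hi : i + 1 < n) → 2 * D < dist (Q ⟨i, by omega⟩) (Q ⟨i + 1, hi⟩)) :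
    dF P Q = D := by
  have lower : ∀ T : Traversal n n, D ≤ T.width P Q := by
    intro T
    by_contra! hlt
    have hdiag := T.eq_diag_of_width_le P Q hlt.le (fun i _ => hP i) (fun i _ => hQ i)
    have hk : T.k = n - 1 :=
      congrArg Prod.fst ((hdiag T.k (by omega)).symm.trans T.last)
    refine hlt.not_ge (hD.trans_le (Finset.sup'_le _ _ fun i _ => ?_))
    exact T.dist_le_width P Q i.isLt i.isLt _ (hdiag i (by omega))
  have upper : (diagTraversal n hn).width P Q ≤ D := by
    refine Finset.sup'_le _ _ fun t _ => ?_
    rw [hD]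
    exact Finset.le_sup' (fun i : Fin n => dist (P i) (Q i))
      (Finset.mem_univ ((diagTraversal n hn).pi t))
  have : Nonempty (Traversal n n) := ⟨diagTraversal n hn⟩
  refine le_antisymm ((ciInf_le ⟨D, ?_⟩ (diagTraversal n hn)).trans upper) (le_ciInf lower)
  rintro _ ⟨T, rfl⟩
  exact lower T
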